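/- Let G be a finite simple graph and let x ∈ V(G). If d_G(x) ≤ gcol(G − x), where d_G(x) is the degree of x in G, then gcol(G) ≤ gcol(G − x) + 1. -/

import Mathlib

open scoped Classical

/-- The number of backneighbors of `v` with respect to the ordering `τ`:
neighbors of `v` in `G` that appear (strictly) before `v` in `τ`. -/
noncomputable def backDeg {V : Type*} [Fintype V] (G : SimpleGraph V)
    (τ : List V) (v : V) : ℕ :=
  (Finset.univ.filter (fun u =>
    G.Adj v u ∧ ∃ i j : Fin τ.length, i < j ∧ τ.get i = u ∧ τ.get j = v)).card

/-- `col(G, τ)`: the maximum over all vertices `v` of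
`1 +` (the number of backneighbors of `v` with respect to `τ`). -/
noncomputable def colOrd {V : Type*} [Fintype V] (G : SimpleGraph V)
    (τ : List V) : ℕ :=
  Finset.univ.sup (fun v => 1 + backDeg G τ v)

/-- The minimax value of the ordering game on `G` continued from the position
(partial ordering) `σ`, where `alice = true` means it is Alice's turn to choose
an unchosen vertex (Alice minimizes the final score `colOrd G τ`, Bob
maximizes it).  This value is the least `s` such that the player-to-move's
opponent-robust guarantee holds, i.e. the least `s` such that Alice has a
strategy from this position guaranteeing a score of at most `s`. -/
noncomputable def gameVal {V : Type*} [Fintype V] (G : SimpleGraph V)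
    (alice : Bool) (σ : List V) : ℕ :=
  if h : (Finset.univ.filter (fun v : V => v ∉ σ)).Nonempty then
    if alice then
      (Finset.univ.filter (fun v : V => v ∉ σ)).attach.inf'
        (Finset.attach_nonempty_iff.mpr h)
        (fun v => gameVal G false (σ ++ [v.1]))
    else
      (Finset.univ.filter (fun v : V => v ∉ σ)).attach.sup'
        (Finset.attach_nonempty_iff.mpr h)
        (fun v => gameVal G true (σ ++ [v.1]))
  else colOrd G σ
termination_by (Finset.univ.filter (fun v : V => v ∉ σ)).card
decreasing_by
  all_goals {
    have hv : ↑v ∉ σ := (Finset.mem_filter.mp v.2).2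
    apply Finset.card_lt_card
    constructor
    · intro u hu
      simp only [Finset.mem_filter, List.mem_append] at hu ⊢
      exact ⟨hu.1, fun h' => hu.2 (Or.inl h')⟩
    · intro hsub
      have := hsub (Finset.mem_filter.mpr ⟨Finset.mem_univ _, hv⟩)
      simp at this }

/-- The game coloring number of `G`: the value of the ordering game on `G`
with Alice moving first (also written `gcol_A`). -/
noncomputable def gcol {V : Type*} [Fintype V] (G : SimpleGraph V) : ℕ :=
  gameVal G true []

/-- The value of the Bob ordering game on `G` (Bob moves first). -/
noncomputable def gcolB {V : Type*} [Fintype V] (G : SimpleGraph V) : ℕ :=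
  gameVal G false []

/-- The `σ`-game coloring number of `G`: the value of the `σ`-preordered
ordering game, in which Alice moves first if `|σ|` is even and Bob moves
first if `|σ|` is odd. -/
noncomputable def sigmaGcol {V : Type*} [Fintype V] (G : SimpleGraph V)
    (σ : List V) : ℕ :=
  if Even σ.length then gameVal G true σ else gameVal G false σ

/-- The Alice `σ`-game coloring number: the value of the `σ`-preordered game
in which Alice moves first. -/
noncomputable def sigmaGcolA {V : Type*} [Fintype V] (G : SimpleGraph V)
    (σ : List V) : ℕ :=
  gameVal G true σ

/-- The Bob `σ`-game coloring number: the value of the `σ`-preordered game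
in which Bob moves first. -/
noncomputable def sigmaGcolB {V : Type*} [Fintype V] (G : SimpleGraph V)
    (σ : List V) : ℕ :=
  gameVal G false σ

/-!
Suppose that Alice can keep the score on `G - S` at most `s`. Adding `S` to the chosen vertices
gives every other vertex at most `#S` further backneighbors, so on `G`, from the position in which
exactly `S` has been chosen, Alice can keep the score at most `s + #S`. It remains to unchoose `S`.
If the vertices of `S` have degree less than `s + #S`, then they satisfy the bound wherever they are
chosen. Alice plays as if they were already chosen, and when Bob actually chooses one of them she
has to move although her imagined game is waiting for Bob. Then she imagines that Bob chooses a
vertex whose total degree is below the bound: one exists because the vertex that ends up last has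
all its neighbors as backneighbors.
-/

open Set

section AliceWins

variable {V : Type*} {G : SimpleGraph V} {s : ℕ} {b b' : Bool} {S X Y : Set V} {v : V}

/-- `AliceWins G s b X`: in the ordering game continued from a position in which `X` is the set of
chosen vertices, Alice can ensure that each vertex chosen from now on has fewer than `s`
backneighbors. As in `gameVal`, it is Alice's turn if `b = true` and Bob's turn if `b = false`. The
order in which `X` was chosen is immaterial; a finished game with Bob to move is covered by
`bob`, whose hypotheses are then vacuous. The notion is meant for finite `V`, as `ncard` is `0` on
infinite sets. -/
inductive AliceWins (G : SimpleGraph V) (s : ℕ) : Bool → Set V → Prop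
  | finished : AliceWins G s true univ
  | alice {X : Set V} {v : V} (hv : v ∉ X) (hback : (G.neighborSet v ∩ X).ncard < s)
      (hwin : AliceWins G s false (insert v X)) : AliceWins G s true X
  | bob {X : Set V} (hback : ∀ v ∉ X, (G.neighborSet v ∩ X).ncard < s)
      (hwin : ∀ v ∉ X, AliceWins G s true (insert v X)) : AliceWins G s false X

theorem aliceWins_true_iff (hX : X ≠ univ) :
    AliceWins G s true X ↔
      ∃ v ∉ X, (G.neighborSet v ∩ X).ncard < s ∧ AliceWins G s false (insert v X) := by
  refine ⟨fun h ↦ ?_, fun ⟨v, hv, hback, hwin⟩ ↦ .alice hv hback hwin⟩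
  cases h with
  | finished => exact absurd rfl hX
  | alice hv hback hwin => exact ⟨_, hv, hback, hwin⟩

theorem aliceWins_false_iff :
    AliceWins G s false X ↔
      ∀ v ∉ X, (G.neighborSet v ∩ X).ncard < s ∧ AliceWins G s true (insert v X) := by
  refine ⟨fun h ↦ ?_, fun h ↦ .bob (fun v hv ↦ (h v hv).1) (fun v hv ↦ (h v hv).2)⟩
  cases h with
  | bob hback hwin => exact fun v hv ↦ ⟨hback v hv, hwin v hv⟩

theorem aliceWins_univ : AliceWins G s b univ := by
  cases b
  · exact aliceWins_false_iff.2 fun v hv ↦ absurd (mem_univ v) hv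
  · exact .finished

theorem neighborSet_subset_of_insert_eq_univ (h : insert v X = univ) : G.neighborSet v ⊆ X :=
  fun u hu ↦ (mem_insert_iff.1 (h ▸ mem_univ u)).resolve_left (G.ne_of_adj hu).symm

theorem AliceWins.exists_ncard_neighborSet_lt (h : AliceWins G s b X) (hX : X ≠ univ) :
    ∃ z ∉ X, (G.neighborSet z).ncard < s := by
  have of_move {X : Set V} {v : V} (hv : v ∉ X) (hback : (G.neighborSet v ∩ X).ncard < s)
      (ih : insert v X ≠ univ → ∃ z ∉ insert v X, (G.neighborSet z).ncard < s) :
      ∃ z ∉ X, (G.neighborSet z).ncard < s := by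
    by_cases hlast : insert v X = univ
    · rw [inter_eq_left.2 (neighborSet_subset_of_insert_eq_univ hlast)] at hback
      exact ⟨v, hv, hback⟩
    · obtain ⟨z, hz, hdeg⟩ := ih hlast
      exact ⟨z, fun hzX ↦ hz (mem_insert_of_mem v hzX), hdeg⟩
  induction h with
  | finished => exact absurd rfl hX
  | alice hv hback _ ih => exact of_move hv hback ih
  | bob hback _ ih =>
    obtain ⟨v, hv⟩ := (ne_univ_iff_exists_notMem _).1 hX
    exact of_move hv (hback v hv) (ih v hv)

section Finite

variable [Finite V]

theorem aliceWins_of_forall_ncard_neighborSet_lt (hX : ∀ v ∉ X, (G.neighborSet v).ncard < s) :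
    AliceWins G s b X := by
  induction X using WellFoundedGT.induction generalizing b with
  | ind X ih =>
    have hback v (hv : v ∉ X) : (G.neighborSet v ∩ X).ncard < s :=
      (ncard_inter_le_ncard_left _ _).trans_lt (hX v hv)
    have hwin b v (hv : v ∉ X) : AliceWins G s b (insert v X) :=
      ih _ (ssubset_insert hv) fun u hu ↦ hX u fun huX ↦ hu (mem_insert_of_mem v huX)
    cases b with
    | false => exact .bob hback (hwin true)
    | true =>
      obtain rfl | hne := eq_or_ne X univ
      · exact .finished
      · obtain ⟨v, hv⟩ := (ne_univ_iff_exists_notMem X).1 hne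
        exact .alice hv (hback v hv) (hwin false v hv)

/-- Since `false ≤ true`, Bob's turn may become Alice's turn but not conversely. -/
theorem AliceWins.of_subset (h : AliceWins G s b Y) (hXY : X ⊆ Y)
    (hdeg : ∀ z ∈ Y \ X, (G.neighborSet z).ncard < s) (hb : b ≤ b') : AliceWins G s b' X := by
  induction h generalizing X b' with
  | finished =>
    exact aliceWins_of_forall_ncard_neighborSet_lt fun z hz ↦ hdeg z ⟨mem_univ z, hz⟩
  | @alice Y v hv hback _ ih =>
    obtain rfl : b' = true := top_le_iff.1 hb
    refine .alice (fun hvX ↦ hv (hXY hvX)) ?_ ?_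
    · exact (ncard_le_ncard (inter_subset_inter_right _ hXY)).trans_lt hback
    · exact ih (insert_subset_insert hXY) (fun z hz ↦ hdeg z (by grind)) le_rfl
  | @bob Y hback hwin ih =>
    -- Alice imagines that Bob chooses a vertex `z` of small degree.
    have alice_wins {X : Set V} (hXY : X ⊆ Y)
        (hdeg : ∀ z ∈ Y \ X, (G.neighborSet z).ncard < s) : AliceWins G s true X := by
      obtain rfl | hY := eq_or_ne Y univ
      · exact aliceWins_of_forall_ncard_neighborSet_lt fun z hz ↦ hdeg z ⟨mem_univ z, hz⟩
      · obtain ⟨z, hzY, hz⟩ := (AliceWins.bob hback hwin).exists_ncard_neighborSet_lt hY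
        exact ih z hzY (hXY.trans (subset_insert z Y)) (fun u hu ↦ by grind) le_rfl
    cases b' with
    | true => exact alice_wins hXY hdeg
    | false =>
      refine aliceWins_false_iff.2 fun w hwX ↦ ?_
      by_cases hwY : w ∈ Y
      · exact ⟨(ncard_inter_le_ncard_left _ _).trans_lt (hdeg w ⟨hwY, hwX⟩),
          alice_wins (insert_subset hwY hXY) fun z hz ↦ hdeg z (by grind)⟩
      · exact ⟨(ncard_le_ncard (inter_subset_inter_right _ hXY)).trans_lt (hback w hwY),
          ih w hwY (insert_subset_insert hXY) (fun z hz ↦ hdeg z (by grind)) le_rfl⟩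

theorem ncard_neighborSet_inter_union_image_le (v : (Sᶜ : Set V)) (X : Set (Sᶜ : Set V)) :
    (G.neighborSet v ∩ (S ∪ (↑) '' X)).ncard ≤
      ((G.induce Sᶜ).neighborSet v ∩ X).ncard + S.ncard := by
  have hsub : G.neighborSet v ∩ (S ∪ (↑) '' X) ⊆
      (↑) '' ((G.induce Sᶜ).neighborSet v ∩ X) ∪ S := by
    rintro u ⟨hvu, huS | ⟨u, huX, rfl⟩⟩
    · exact .inr huS
    · exact .inl ⟨u, ⟨hvu, huX⟩, rfl⟩
  calc (G.neighborSet v ∩ (S ∪ (↑) '' X)).ncard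
      ≤ ((↑) '' ((G.induce Sᶜ).neighborSet v ∩ X) ∪ S : Set V).ncard := ncard_le_ncard hsub
    _ ≤ ((↑) '' ((G.induce Sᶜ).neighborSet v ∩ X) : Set V).ncard + S.ncard := ncard_union_le _ _
    _ = ((G.induce Sᶜ).neighborSet v ∩ X).ncard + S.ncard := by
      rw [ncard_image_of_injective _ Subtype.val_injective]

theorem AliceWins.union_image {X : Set (Sᶜ : Set V)} (h : AliceWins (G.induce Sᶜ) s b X) :
    AliceWins G (s + S.ncard) b (S ∪ (↑) '' X) := by
  have hback {v : (Sᶜ : Set V)} {X : Set (Sᶜ : Set V)}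
      (hv : ((G.induce Sᶜ).neighborSet v ∩ X).ncard < s) :
      (G.neighborSet v ∩ (S ∪ (↑) '' X)).ncard < s + S.ncard :=
    (ncard_neighborSet_inter_union_image_le v X).trans_lt (Nat.add_lt_add_right hv _)
  induction h with
  | finished =>
    rw [image_univ, Subtype.range_coe, union_compl_self]
    exact .finished
  | @alice X v hv hback_v _ ih =>
    rw [image_insert_eq, union_insert] at ih
    refine .alice ?_ (hback hback_v) ih
    rintro (hvS | hvX)
    · exact v.2 hvS
    · exact hv (Subtype.val_injective.mem_set_image.1 hvX)
  | @bob X hback_all _ ih =>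
    refine aliceWins_false_iff.2 fun v hv ↦ ?_
    lift v to (Sᶜ : Set V) using fun hvS ↦ hv (.inl hvS)
    have hvX : v ∉ X := fun hvX ↦ hv (.inr (mem_image_of_mem _ hvX))
    have hwin := ih v hvX
    rw [image_insert_eq, union_insert] at hwin
    exact ⟨hback (hback_all v hvX), hwin⟩

end Finite

end AliceWins

section GameVal

theorem exists_lt_get_append_singleton_iff {α : Type*} {l : List α} {a u v : α} :
    (∃ i j : Fin (l ++ [a]).length, i < j ∧ (l ++ [a]).get i = u ∧ (l ++ [a]).get j = v) ↔
      (∃ i j : Fin l.length, i < j ∧ l.get i = u ∧ l.get j = v) ∨ u ∈ l ∧ v = a := by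
  have iff_not_pairwise (l : List α) :
      (∃ i j : Fin l.length, i < j ∧ l.get i = u ∧ l.get j = v) ↔
        ¬ l.Pairwise fun c d ↦ ¬ (c = u ∧ d = v) := by
    simp only [List.pairwise_iff_get, not_forall, not_not, exists_prop]
  rw [iff_not_pairwise, iff_not_pairwise, List.pairwise_append]
  simp only [List.pairwise_singleton, List.mem_singleton]
  grind

variable {V : Type*} [Fintype V] {G : SimpleGraph V} {s : ℕ} {b : Bool} {σ : List V} {v w : V}

theorem backDeg_append_singleton_self (hw : w ∉ σ) :
    backDeg G (σ ++ [w]) w = (G.neighborSet w ∩ {u | u ∈ σ}).ncard := by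
  have not_before (u : V) : ¬ ∃ i j : Fin σ.length, i < j ∧ σ.get i = u ∧ σ.get j = w :=
    fun ⟨_, j, _, _, hj⟩ ↦ hw (hj ▸ σ.get_mem j)
  rw [backDeg, ← ncard_coe_finset]
  congr 1
  ext u
  simp only [exists_lt_get_append_singleton_iff, not_before, false_or, and_true, Finset.coe_filter,
    Finset.mem_univ, true_and, mem_ofPred_eq, mem_inter_iff, SimpleGraph.mem_neighborSet]

theorem backDeg_append_singleton_of_ne (hvw : v ≠ w) :
    backDeg G (σ ++ [w]) v = backDeg G σ v := by
  simp only [backDeg, exists_lt_get_append_singleton_iff, hvw, and_false, or_false]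

theorem forall_backDeg_append_singleton_lt_iff (hw : w ∉ σ) :
    (∀ v ∈ σ ++ [w], backDeg G (σ ++ [w]) v < s) ↔
      (∀ v ∈ σ, backDeg G σ v < s) ∧ (G.neighborSet w ∩ {u | u ∈ σ}).ncard < s := by
  rw [List.forall_mem_append, List.forall_mem_singleton, backDeg_append_singleton_self hw]
  refine and_congr_left' (forall₂_congr fun v hv ↦ ?_)
  rw [backDeg_append_singleton_of_ne (ne_of_mem_of_not_mem hv hw)]

theorem colOrd_le_iff : colOrd G σ ≤ s ↔ ∀ v, backDeg G σ v < s := by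
  simp only [colOrd, Finset.sup_le_iff, Finset.mem_univ, forall_const, Nat.one_add_le_iff]

theorem gameVal_eq_colOrd (hσ : ∀ v, v ∈ σ) : gameVal G b σ = colOrd G σ := by
  rw [gameVal, dif_neg]
  simp [hσ]

theorem gameVal_true_le_iff (hσ : ∃ v, v ∉ σ) :
    gameVal G true σ ≤ s ↔ ∃ v ∉ σ, gameVal G false (σ ++ [v]) ≤ s := by
  rw [gameVal, dif_pos (by simpa [Finset.Nonempty] using hσ)]
  simp

theorem gameVal_false_le_iff (hσ : ∃ v, v ∉ σ) :
    gameVal G false σ ≤ s ↔ ∀ v ∉ σ, gameVal G true (σ ++ [v]) ≤ s := by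
  rw [gameVal, dif_pos (by simpa [Finset.Nonempty] using hσ)]
  simp

theorem gameVal_le_iff :
    gameVal G b σ ≤ s ↔ (∀ v ∈ σ, backDeg G σ v < s) ∧ AliceWins G s b {v | v ∈ σ} := by
  induction hX : {v | v ∈ σ} using WellFoundedGT.induction generalizing b σ with
  | ind X ih =>
    subst hX
    by_cases hσ : ∀ v, v ∈ σ
    · simp only [gameVal_eq_colOrd hσ, colOrd_le_iff, hσ, forall_const, ofPred_true, aliceWins_univ,
        and_true]
    have ih_move (b : Bool) (v : V) (hv : v ∉ σ) : gameVal G b (σ ++ [v]) ≤ s ↔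
        ((∀ v ∈ σ, backDeg G σ v < s) ∧ (G.neighborSet v ∩ {u | u ∈ σ}).ncard < s) ∧
          AliceWins G s b (insert v {u | u ∈ σ}) := by
      rw [← forall_backDeg_append_singleton_lt_iff hv]
      exact ih _ (ssubset_insert hv) (by ext u; simp [or_comm])
    push Not at hσ
    cases b with
    | true =>
      have hne : {v | v ∈ σ} ≠ univ := (ne_univ_iff_exists_notMem _).2 hσ
      rw [gameVal_true_le_iff hσ, aliceWins_true_iff hne]
      grind
    | false =>
      rw [gameVal_false_le_iff hσ, aliceWins_false_iff]
      grind

theorem gameVal_nil_le_iff : gameVal G b [] ≤ s ↔ AliceWins G s b ∅ := by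
  simp [gameVal_le_iff]

end GameVal

theorem gcol_le_of_degree_le_general {V : Type*} [Fintype V] (G : SimpleGraph V) (S : Set V)
    [Fintype (Sᶜ : Set V)] (b : Bool) {s : ℕ} (hs : gameVal (G.induce Sᶜ) b [] ≤ s)
    (hdeg : ∀ z ∈ S, (G.neighborSet z).ncard < s + S.ncard) :
    gameVal G b [] ≤ s + S.ncard := by
  rw [gameVal_nil_le_iff] at hs ⊢
  have hwin : AliceWins G (s + S.ncard) b S := by simpa using hs.union_image
  exact hwin.of_subset (empty_subset S) (fun z hz ↦ hdeg z hz.1) le_rfl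

/-- If `d_G(x) ≤ gcol(G − x)`, then
`gcol(G) ≤ gcol(G − x) + 1`. -/
theorem gcol_le_of_degree_le {V : Type*} [Fintype V] (G : SimpleGraph V)
    (x : V) (hd : (G.neighborSet x).ncard ≤ gcol (G.induce ({x}ᶜ : Set V))) :
    gcol G ≤ gcol (G.induce ({x}ᶜ : Set V)) + 1 := by
  have hdeg : ∀ z ∈ ({x} : Set V), (G.neighborSet z).ncard <
      gcol (G.induce ({x}ᶜ : Set V)) + ({x} : Set V).ncard := by
    simpa [Nat.lt_succ_iff] using hd
  simpa using! gcol_le_of_degree_le_general G {x} true le_rfl hdeg
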